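/- Let H be a complex Hilbert space and let T be a bounded linear operator on H. Then T is centered (i.e. the operators in the family {T^n(T^n)* : n ≥ 1} ∪ {(T^n)*T^n : n ≥ 1} mutually commute) if and only if |T^n| commutes with |(T^m)*| for all m, n ≥ 1. -/

import Mathlib

set_option synthInstance.maxHeartbeats 1000000
set_option maxHeartbeats 1000000

open ContinuousLinearMap

/-- `opAbs T = |T| = (T*T)^(1/2)`, the positive square root of `T*T` obtained by the
continuous functional calculus. -/
noncomputable def opAbs {H : Type*} [NormedAddCommGroup H] [InnerProductSpace ℂ H]
    [CompleteSpace H] (T : H →L[ℂ] H) : H →L[ℂ] H :=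
  CFC.sqrt (adjoint T * T)

/-- An operator `T` is centered if the operators in the family
`{T^n (T^n)* : n ≥ 1} ∪ {(T^n)* T^n : n ≥ 1}` mutually commute. -/
def Centered {H : Type*} [NormedAddCommGroup H] [InnerProductSpace ℂ H]
    [CompleteSpace H] (T : H →L[ℂ] H) : Prop :=
  ∀ m n : ℕ, 1 ≤ m → 1 ≤ n →
    Commute (T ^ m * adjoint (T ^ m)) (T ^ n * adjoint (T ^ n)) ∧
    Commute (adjoint (T ^ m) * T ^ m) (adjoint (T ^ n) * T ^ n) ∧
    Commute (T ^ m * adjoint (T ^ m)) (adjoint (T ^ n) * T ^ n)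

/-!
Since `|x|² = x*x`, two absolute values commute exactly when `x*x` and `y*y` do, so the second
condition says that `(a^m)(a^m)*` always commutes with `(a^n)*(a^n)`. Sandwiching that commutation
between `(a^m)*` and `a^m` shows that `(a^m)*(a^m)` commutes with `(a^(n+m))*(a^(n+m))`, and the
same argument for `a*` handles `(a^m)(a^m)*` and `(a^n)(a^n)*`.
-/

section StarMonoid

variable {M : Type*}

lemma commute_star_mul_self_of_commute_mul_star_self [Semigroup M] [StarMul M] {a b : M}
    (h : Commute (a * star a) (star b * b)) :
    Commute (star a * a) (star (b * a) * (b * a)) :=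
  calc star a * a * (star (b * a) * (b * a))
    _ = star a * (a * star a * (star b * b)) * a := by simp only [star_mul, mul_assoc]
    _ = star a * (star b * b * (a * star a)) * a := by rw [h.eq]
    _ = star (b * a) * (b * a) * (star a * a) := by simp only [star_mul, mul_assoc]

variable [Monoid M] [StarMul M]

/-- An element `a` of a star monoid is centered if the elements `a^n (a^n)*` and `(a^n)* a^n`,
`n ≥ 1`, mutually commute. For bounded operators on a Hilbert space, where `star` is the adjoint,
this unfolds to `Centered`. -/
def IsCentered (a : M) : Prop :=
  ∀ m n : ℕ, 1 ≤ m → 1 ≤ n →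
    Commute (a ^ m * star (a ^ m)) (a ^ n * star (a ^ n)) ∧
    Commute (star (a ^ m) * a ^ m) (star (a ^ n) * a ^ n) ∧
    Commute (a ^ m * star (a ^ m)) (star (a ^ n) * a ^ n)

variable {a : M}

lemma commute_star_pow_mul_pow
    (h : ∀ m n : ℕ, 1 ≤ m → 1 ≤ n → Commute (a ^ m * star (a ^ m)) (star (a ^ n) * a ^ n))
    {m n : ℕ} (hm : 1 ≤ m) (hn : 1 ≤ n) :
    Commute (star (a ^ m) * a ^ m) (star (a ^ n) * a ^ n) := by
  wlog hmn : m ≤ n generalizing m n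
  · exact (this hn hm (le_of_not_ge hmn)).symm
  obtain rfl | hlt := hmn.eq_or_lt
  · exact Commute.refl _
  · rw [← Nat.sub_add_cancel hmn, pow_add]
    exact commute_star_mul_self_of_commute_mul_star_self (h m (n - m) hm (Nat.sub_pos_of_lt hlt))

lemma commute_pow_mul_star_pow
    (h : ∀ m n : ℕ, 1 ≤ m → 1 ≤ n → Commute (a ^ m * star (a ^ m)) (star (a ^ n) * a ^ n))
    {m n : ℕ} (hm : 1 ≤ m) (hn : 1 ≤ n) :
    Commute (a ^ m * star (a ^ m)) (a ^ n * star (a ^ n)) := by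
  have h_star (k l : ℕ) (hk : 1 ≤ k) (hl : 1 ≤ l) :
      Commute (star a ^ k * star (star a ^ k)) (star (star a ^ l) * star a ^ l) := by
    simpa only [← star_pow, star_star] using (h l k hl hk).symm
  simpa only [← star_pow, star_star] using commute_star_pow_mul_pow h_star hm hn

lemma isCentered_iff_commute :
    IsCentered a ↔
      ∀ m n : ℕ, 1 ≤ m → 1 ≤ n → Commute (a ^ m * star (a ^ m)) (star (a ^ n) * a ^ n) where
  mp h m n hm hn := (h m n hm hn).2.2
  mpr h m n hm hn :=
    ⟨commute_pow_mul_star_pow h hm hn, commute_star_pow_mul_pow h hm hn, h m n hm hn⟩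

end StarMonoid

section AbsoluteValue

variable {A : Type*} [TopologicalSpace A] [PartialOrder A]

section NonUnital

variable [NonUnitalRing A] [StarRing A] [IsTopologicalRing A] [T2Space A] [Module ℝ A]
  [SMulCommClass ℝ A A] [IsScalarTower ℝ A A]
  [NonUnitalContinuousFunctionalCalculus ℝ A IsSelfAdjoint]
  [StarOrderedRing A] [NonnegSpectrumClass ℝ A]

lemma commute_sqrt_iff {a b : A} (ha : 0 ≤ a) (hb : 0 ≤ b) :
    Commute (CFC.sqrt a) (CFC.sqrt b) ↔ Commute a b where
  mp h := by
    rw [← CFC.sqrt_mul_sqrt_self a ha, ← CFC.sqrt_mul_sqrt_self b hb]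
    exact (h.mul_left h).mul_right (h.mul_left h)
  mpr h := ((h.cfcₙ_nnreal _).symm.cfcₙ_nnreal _).symm

lemma commute_abs_iff {a b : A} :
    Commute (CFC.abs a) (CFC.abs b) ↔ Commute (star a * a) (star b * b) :=
  commute_sqrt_iff (star_mul_self_nonneg a) (star_mul_self_nonneg b)

end NonUnital

variable [Ring A] [StarRing A] [IsTopologicalRing A] [T2Space A] [Algebra ℝ A]
  [NonUnitalContinuousFunctionalCalculus ℝ A IsSelfAdjoint]
  [StarOrderedRing A] [NonnegSpectrumClass ℝ A]

theorem stmt_15_general (a : A) :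
    IsCentered a ↔
      ∀ m n : ℕ, 1 ≤ m → 1 ≤ n → Commute (CFC.abs (a ^ n)) (CFC.abs (star (a ^ m))) := by
  simp only [isCentered_iff_commute, commute_abs_iff, star_star,
    Commute.symm_iff (a := star (a ^ _) * a ^ _)]

end AbsoluteValue

/-- `T` is centered if and only if `|T^n|` commutes with `|(T^m)*|` for all `m, n ≥ 1`. -/
theorem stmt_15 {H : Type*} [NormedAddCommGroup H] [InnerProductSpace ℂ H] [CompleteSpace H]
    (T : H →L[ℂ] H) :
    Centered T ↔
      ∀ m n : ℕ, 1 ≤ m → 1 ≤ n →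
        Commute (opAbs (T ^ n)) (opAbs (adjoint (T ^ m))) :=
  stmt_15_general T
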